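/- Character property of the vincular signature: let N ∈ ℕ, 𝔏 ∈ IPs an interval partition of [N] and Λ ∈ 𝔖_N. Then for all vincular patterns (𝔰,σ) and (𝔱,τ), ⟨GPC(𝔏,Λ), (𝔰,σ)⟩ · ⟨GPC(𝔏,Λ), (𝔱,τ)⟩ = Σ_{(𝔤,γ)} C((𝔰,σ),(𝔱,τ);(𝔤,γ)) · ⟨GPC(𝔏,Λ), (𝔤,γ)⟩, the sum over all vincular patterns (𝔤,γ), only finitely many summands being nonzero. -/

import Mathlib

/-!
The left-hand side counts pairs `(S, T)` of subsets of `[N]`, where `S` is an occurrence of `p` and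
`T` an occurrence of `q`. Such a pair is sorted by the vincular pattern it spans (`pairType`):
relabel `U = S ∪ T` by ranks, so that `S` and `T` become `A, A' ⊆ [|U|]`; the blocks of the
partitions of `p` and `q` become intervals in `A` and `A'`, which are glued to an interval partition
of `[|U|]`; and the permutation is standardized on `U`. The pairs spanning a given pattern `r` are
in bijection, via `(S, T) ↦ ((A, A'), U)`, with the pairs formed by a configuration counted by
`vincCoeff p q r` and an occurrence `U` of `r` (`vincCoeff_mul_GPC`). Summing over `r` gives the
identity.

The bijection rests on three facts.
* `IPle_stdIP_restrictIP_iff`: `s ≤ std(L(A))` means that the blocks of `s`, transported to `A`,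
  are intervals of consecutive integers lying inside blocks of `L`.
* `isIntervalPartitionOf_and_stdIP_eq_iff`: an interval partition is determined by its ground set
  and its standardization, so the existential in `vincCoeff` involves no choice.
* `liftSet_glue`, `isIntervalPartition_glue`: overlapping intervals chain up to intervals, and if
  each lies in a block of `L`, the whole chain lies in a single block of `L`.
-/

open Set

/-- A block: a nonempty interval of consecutive positive integers. -/
def IsIntervalBlock (B : Set ℕ) : Prop :=
  B.Nonempty ∧ (∀ x ∈ B, 1 ≤ x) ∧
    ∀ x ∈ B, ∀ z ∈ B, ∀ y : ℕ, x ≤ y → y ≤ z → y ∈ B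

/-- An interval partition of a finite subset of the positive integers:
a family of pairwise disjoint nonempty intervals with finite ground set. -/
def IsIntervalPartition (P : Set (Set ℕ)) : Prop :=
  (⋃₀ P).Finite ∧ (∀ B ∈ P, IsIntervalBlock B) ∧
    ∀ B ∈ P, ∀ C ∈ P, B ≠ C → B ∩ C = ∅

/-- An interval partition with prescribed ground set `A`. -/
def IsIntervalPartitionOf (P : Set (Set ℕ)) (A : Set ℕ) : Prop :=
  IsIntervalPartition P ∧ ⋃₀ P = A

/-- Standardized interval partitions: interval partitions of `{1, …, n}`. -/
def IsStdIP (P : Set (Set ℕ)) : Prop :=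
  IsIntervalPartition P ∧ ∃ n : ℕ, ⋃₀ P = Set.Icc 1 n

/-- Refinement order: same ground set, and every block of `P`
is contained in some block of `Q`. -/
def IPle (P Q : Set (Set ℕ)) : Prop :=
  ⋃₀ P = ⋃₀ Q ∧ ∀ B ∈ P, ∃ C ∈ Q, B ⊆ C

/-- The equivalence relation on blocks generated by having nonempty
intersection (among members of `S`). -/
def glueRel (S : Set (Set ℕ)) : Set ℕ → Set ℕ → Prop :=
  Relation.EqvGen fun X Y => X ∈ S ∧ Y ∈ S ∧ (X ∩ Y).Nonempty

/-- Gluing of two interval partitions. -/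
def glue (P Q : Set (Set ℕ)) : Set (Set ℕ) :=
  (fun T => ⋃₀ {X ∈ P ∪ Q | glueRel (P ∪ Q) T X}) '' (P ∪ Q)

/-- The relation on `A` generated by `y = x + 1`. -/
def cliqueRel (A : Set ℕ) : ℕ → ℕ → Prop :=
  Relation.EqvGen fun x y => x ∈ A ∧ y ∈ A ∧ y = x + 1

/-- `cliques A`: the coarsest interval partition of `A`. -/
def cliques (A : Set ℕ) : Set (Set ℕ) :=
  (fun x => {y ∈ A | cliqueRel A x y}) '' A

/-- `𝓘(A)`: the interval partition of `A ∩ ⋃₀ 𝓘` induced by `𝓘`. -/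
def restrictIP (P : Set (Set ℕ)) (A : Set ℕ) : Set (Set ℕ) :=
  {Z | Z ≠ ∅ ∧ ∃ B ∈ P, ∃ c ∈ cliques A, Z = B ∩ c}

/-- The unique order preserving map sending a finite `S ⊆ ℕ` onto `{1,…,|S|}`. -/
noncomputable def stdMap (S : Set ℕ) (x : ℕ) : ℕ := {y ∈ S | y ≤ x}.ncard

/-- Standardization of an interval partition. -/
noncomputable def stdIP (P : Set (Set ℕ)) : Set (Set ℕ) :=
  (fun B => stdMap (⋃₀ P) '' B) '' P

/-- Shifting all blocks of a partition up by `m`. -/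
def shiftIP (m : ℕ) (P : Set (Set ℕ)) : Set (Set ℕ) :=
  (fun B => (fun x => x + m) '' B) '' P

/-- Concatenation of standardized interval partitions. -/
noncomputable def concatIP (P Q : Set (Set ℕ)) : Set (Set ℕ) :=
  P ∪ shiftIP (⋃₀ P).ncard Q

/-- Quasi-shuffle section coefficient `c(𝔰,𝔱;𝔤)`. -/
noncomputable def secCoeff (s t g : Set (Set ℕ)) : ℕ :=
  {p : Set ℕ × Set ℕ | p.1 ∪ p.2 = ⋃₀ g ∧
      ∃ I I' : Set (Set ℕ), IsIntervalPartitionOf I p.1 ∧ IsIntervalPartitionOf I' p.2 ∧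
        stdIP I = s ∧ stdIP I' = t ∧ glue I I' = g}.ncard

/-- The signature pairing `⟨IPC(𝔏), 𝔰⟩`. -/
noncomputable def IPC (L s : Set (Set ℕ)) : ℕ :=
  {A : Set ℕ | A ⊆ ⋃₀ L ∧ IPle s (stdIP (restrictIP L A))}.ncard

open Classical in
/-- The unique refinement `𝓘_𝔰` of `𝓘` with standardization `𝔰` (junk value otherwise). -/
noncomputable def refineTo (P s : Set (Set ℕ)) : Set (Set ℕ) :=
  if h : ∃ Q : Set (Set ℕ), IsIntervalPartition Q ∧ IPle Q P ∧ stdIP Q = s then h.choose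
  else ∅

/-- The concatenation of single blocks of the sizes listed in `l`. -/
noncomputable def concatList (l : List ℕ) : Set (Set ℕ) :=
  l.foldl (fun acc m => concatIP acc {Set.Icc 1 m}) ∅

/-- A permutation of `{1,…,n}`, encoded as a function on `ℕ` fixing everything else. -/
def IsPermOf (n : ℕ) (σ : ℕ → ℕ) : Prop :=
  Set.BijOn σ (Set.Icc 1 n) (Set.Icc 1 n) ∧ ∀ x : ℕ, x ∉ Set.Icc 1 n → σ x = x

open Classical in
/-- The `i`-th smallest element of `A` (junk value otherwise). -/
noncomputable def nthElt (A : Set ℕ) (i : ℕ) : ℕ :=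
  if h : ∃ x ∈ A, stdMap A x = i then h.choose else 0

/-- Standardization `st(Λ|_A)` of `Λ` restricted to `A`: the permutation of `{1,…,|A|}`
recording the relative order of the values of `Λ` on `A`. -/
noncomputable def stdRestrict (lam : ℕ → ℕ) (A : Set ℕ) : ℕ → ℕ := fun i =>
  if 1 ≤ i ∧ i ≤ A.ncard then {b ∈ A | lam b ≤ lam (nthElt A i)}.ncard else i

/-- Concatenation `σ ⊡ τ` of permutations of `{1,…,m}` and `{1,…,n}`. -/
def permConcat (m n : ℕ) (σ τ : ℕ → ℕ) : ℕ → ℕ := fun i =>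
  if 1 ≤ i ∧ i ≤ m then σ i
  else if m + 1 ≤ i ∧ i ≤ m + n then τ (i - m) + m
  else i

/-- A vincular pattern: a standardized interval partition of `{1,…,n}`
together with a permutation of `{1,…,n}`. -/
def IsVincular (p : Set (Set ℕ) × (ℕ → ℕ)) : Prop :=
  ∃ n : ℕ, IsIntervalPartitionOf p.1 (Set.Icc 1 n) ∧ IsPermOf n p.2

/-- Concatenation of vincular patterns. -/
noncomputable def vincConcat (p q : Set (Set ℕ) × (ℕ → ℕ)) : Set (Set ℕ) × (ℕ → ℕ) :=
  (concatIP p.1 q.1, permConcat (⋃₀ p.1).ncard (⋃₀ q.1).ncard p.2 q.2)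

/-- Vincular section coefficient `C((𝔰,σ),(𝔱,τ);(𝔤,γ))`. -/
noncomputable def vincCoeff (p q r : Set (Set ℕ) × (ℕ → ℕ)) : ℕ :=
  {AB : Set ℕ × Set ℕ | AB.1 ∪ AB.2 = ⋃₀ r.1 ∧
      (∃ I I' : Set (Set ℕ), IsIntervalPartitionOf I AB.1 ∧ IsIntervalPartitionOf I' AB.2 ∧
        stdIP I = p.1 ∧ stdIP I' = q.1 ∧ glue I I' = r.1) ∧
      stdRestrict r.2 AB.1 = p.2 ∧ stdRestrict r.2 AB.2 = q.2}.ncard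

/-- Vincular signature pairing `⟨GPC(𝔏,Λ), (𝔰,σ)⟩`. -/
noncomputable def GPC (L : Set (Set ℕ)) (lam : ℕ → ℕ) (p : Set (Set ℕ) × (ℕ → ℕ)) : ℕ :=
  {A : Set ℕ | A ⊆ ⋃₀ L ∧ IPle p.1 (stdIP (restrictIP L A)) ∧ stdRestrict lam A = p.2}.ncard

/-! ### The standardization map -/

theorem stdMap_le_iff {U : Set ℕ} (hU : U.Finite) {y : ℕ} (hy : y ∈ U) (x : ℕ) :
    stdMap U y ≤ stdMap U x ↔ y ≤ x := by
  constructor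
  · intro h
    by_contra! hlt
    have : stdMap U x < stdMap U y := by
      apply Set.ncard_lt_ncard _ (hU.subset (Set.sep_subset _ _))
      refine ⟨fun z hz => ⟨hz.1, hz.2.trans hlt.le⟩, fun hsub => ?_⟩
      have := (hsub ⟨hy, le_rfl⟩ : y ∈ {z ∈ U | z ≤ x}).2
      omega
    omega
  · intro h
    exact Set.ncard_le_ncard (fun z hz => ⟨hz.1, hz.2.trans h⟩) (hU.subset (Set.sep_subset _ _))

theorem stdMap_injOn {U : Set ℕ} (hU : U.Finite) : Set.InjOn (stdMap U) U := fun _ hx _ hy h =>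
  le_antisymm ((stdMap_le_iff hU hx _).1 h.le) ((stdMap_le_iff hU hy _).1 h.ge)

theorem stdMap_image {U : Set ℕ} (hU : U.Finite) : stdMap U '' U = Set.Icc 1 U.ncard := by
  apply Set.eq_of_subset_of_ncard_le
  · rintro _ ⟨x, hx, rfl⟩
    refine ⟨?_, Set.ncard_le_ncard (Set.sep_subset _ _) hU⟩
    exact (Set.ncard_pos (hU.subset (Set.sep_subset _ _))).2 ⟨x, hx, le_rfl⟩
  · rw [(stdMap_injOn hU).ncard_image, Set.ncard_eq_toFinset_card']
    simp
  · exact Set.finite_Icc _ _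

/-- Standardizing `S ⊆ U` directly, or first relabelling by the ranks in `U`, is the same. -/
theorem stdMap_comp {S U : Set ℕ} (hU : U.Finite) (hS : S ⊆ U) (x : ℕ) :
    stdMap (stdMap U '' S) (stdMap U x) = stdMap S x := by
  have : {y ∈ stdMap U '' S | y ≤ stdMap U x} = stdMap U '' {y ∈ S | y ≤ x} := by
    ext z
    constructor
    · rintro ⟨⟨y, hy, rfl⟩, h⟩
      exact ⟨y, ⟨hy, (stdMap_le_iff hU (hS hy) x).1 h⟩, rfl⟩
    · rintro ⟨y, ⟨hy, h⟩, rfl⟩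
      exact ⟨⟨y, hy, rfl⟩, (stdMap_le_iff hU (hS hy) x).2 h⟩
  unfold stdMap at this ⊢
  rw [this]
  exact ((stdMap_injOn hU).mono fun y hy => hS hy.1).ncard_image

theorem nthElt_stdMap {U : Set ℕ} (hU : U.Finite) {x : ℕ} (hx : x ∈ U) :
    nthElt U (stdMap U x) = x := by
  have h : ∃ y ∈ U, stdMap U y = stdMap U x := ⟨x, hx, rfl⟩
  unfold nthElt
  rw [dif_pos h]
  exact stdMap_injOn hU h.choose_spec.1 hx h.choose_spec.2

/-- The elements of `A` whose rank in `A` lies in `B`: the set `B ⊆ [|A|]` transported to `A`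
along the inverse of the standardization map. -/
def liftSet (A B : Set ℕ) : Set ℕ := {x ∈ A | stdMap A x ∈ B}

theorem stdMap_image_liftSet {A B : Set ℕ} (hB : B ⊆ stdMap A '' A) :
    stdMap A '' liftSet A B = B := by
  ext z
  constructor
  · rintro ⟨x, hx, rfl⟩
    exact hx.2
  · intro hz
    obtain ⟨x, hx, rfl⟩ := hB hz
    exact ⟨x, ⟨hx, hz⟩, rfl⟩

theorem liftSet_image {A X : Set ℕ} (hA : A.Finite) (hX : X ⊆ A) :
    liftSet A (stdMap A '' X) = X := by
  ext z
  constructor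
  · rintro ⟨hz, x, hx, h⟩
    rwa [← stdMap_injOn hA (hX hx) hz h]
  · intro hz
    exact ⟨hX hz, z, hz, rfl⟩

theorem liftSet_stdMap_image {S U : Set ℕ} (hU : U.Finite) (hS : S ⊆ U) (B : Set ℕ) :
    liftSet (stdMap U '' S) B = stdMap U '' liftSet S B := by
  ext z
  constructor
  · rintro ⟨⟨x, hx, rfl⟩, h⟩
    rw [stdMap_comp hU hS] at h
    exact ⟨x, ⟨hx, h⟩, rfl⟩
  · rintro ⟨x, ⟨hx, h⟩, rfl⟩
    refine ⟨⟨x, hx, rfl⟩, ?_⟩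
    rwa [stdMap_comp hU hS]

theorem liftSet_mono (A : Set ℕ) {B C : Set ℕ} (h : B ⊆ C) : liftSet A B ⊆ liftSet A C :=
  fun _ hx => ⟨hx.1, h hx.2⟩

/-- An interval of ranks inside a set of ranks that lifts to an interval lifts to an interval. -/
theorem ordConnected_liftSet {A J Z : Set ℕ} (hA : A.Finite) (hJ : J.OrdConnected)
    (hZ : Z.OrdConnected) (hZA : Z ⊆ A) (hJZ : liftSet A J ⊆ Z) : (liftSet A J).OrdConnected := by
  refine ⟨fun x hx z hz y hy => ?_⟩
  have hyA : y ∈ A := hZA (hZ.out (hJZ hx) (hJZ hz) hy)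
  exact ⟨hyA, hJ.out hx.2 hz.2 ⟨(stdMap_le_iff hA hx.1 _).2 hy.1, (stdMap_le_iff hA hyA _).2 hy.2⟩⟩

/-- An interval contained in `U` is sent by the standardization map of `U` to an interval. -/
theorem ordConnected_stdMap_image {U X : Set ℕ} (hU : U.Finite) (hX : X.OrdConnected)
    (hXU : X ⊆ U) : (stdMap U '' X).OrdConnected := by
  refine ⟨?_⟩
  rintro _ ⟨x, hx, rfl⟩ _ ⟨z, hz, rfl⟩ w hw
  have hmem : ∀ a ∈ U, stdMap U a ∈ Set.Icc 1 U.ncard := fun a ha => by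
    rw [← stdMap_image hU]
    exact ⟨a, ha, rfl⟩
  have : w ∈ Set.Icc 1 U.ncard :=
    ⟨(hmem x (hXU hx)).1.trans hw.1, hw.2.trans (hmem z (hXU hz)).2⟩
  rw [← stdMap_image hU] at this
  obtain ⟨y, hy, rfl⟩ := this
  exact ⟨y, hX.out hx hz ⟨(stdMap_le_iff hU (hXU hx) _).1 hw.1, (stdMap_le_iff hU hy _).1 hw.2⟩, rfl⟩

/-! ### Standardization of permutations -/

theorem rank_le_iff {U : Set ℕ} (hU : U.Finite) (lam : ℕ → ℕ) {y z : ℕ} (hy : y ∈ U) :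
    {b ∈ U | lam b ≤ lam y}.ncard ≤ {b ∈ U | lam b ≤ lam z}.ncard ↔ lam y ≤ lam z := by
  constructor
  · intro h
    by_contra! hlt
    have : {b ∈ U | lam b ≤ lam z}.ncard < {b ∈ U | lam b ≤ lam y}.ncard := by
      apply Set.ncard_lt_ncard _ (hU.subset (Set.sep_subset _ _))
      refine ⟨fun b hb => ⟨hb.1, hb.2.trans hlt.le⟩, fun hsub => ?_⟩
      have := (hsub ⟨hy, le_rfl⟩ : y ∈ {b ∈ U | lam b ≤ lam z}).2
      omega
    omega
  · intro h
    exact Set.ncard_le_ncard (fun b hb => ⟨hb.1, hb.2.trans h⟩) (hU.subset (Set.sep_subset _ _))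

theorem stdRestrict_stdMap {U : Set ℕ} (hU : U.Finite) (lam : ℕ → ℕ) {x : ℕ} (hx : x ∈ U) :
    stdRestrict lam U (stdMap U x) = {b ∈ U | lam b ≤ lam x}.ncard := by
  have h : stdMap U x ∈ Set.Icc 1 U.ncard := by
    rw [← stdMap_image hU]
    exact ⟨x, hx, rfl⟩
  rw [Set.mem_Icc] at h
  unfold stdRestrict
  rw [if_pos h, nthElt_stdMap hU hx]

theorem isPermOf_stdRestrict {U : Set ℕ} (hU : U.Finite) {lam : ℕ → ℕ} (hlam : Set.InjOn lam U) :
    IsPermOf U.ncard (stdRestrict lam U) := by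
  refine ⟨?_, fun i hi => if_neg hi⟩
  have hmaps : Set.MapsTo (stdRestrict lam U) (Set.Icc 1 U.ncard) (Set.Icc 1 U.ncard) := by
    intro i hi
    rw [← stdMap_image hU] at hi
    obtain ⟨x, hx, rfl⟩ := hi
    rw [stdRestrict_stdMap hU lam hx]
    exact ⟨(Set.ncard_pos (hU.subset (Set.sep_subset _ _))).2 ⟨x, hx, le_rfl⟩,
      Set.ncard_le_ncard (Set.sep_subset _ _) hU⟩
  have hinj : Set.InjOn (stdRestrict lam U) (Set.Icc 1 U.ncard) := by
    intro i hi j hj hij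
    rw [← stdMap_image hU] at hi hj
    obtain ⟨x, hx, rfl⟩ := hi
    obtain ⟨y, hy, rfl⟩ := hj
    rw [stdRestrict_stdMap hU lam hx, stdRestrict_stdMap hU lam hy] at hij
    rw [hlam hx hy (le_antisymm ((rank_le_iff hU lam hx).1 hij.le)
      ((rank_le_iff hU lam hy).1 hij.ge))]
  refine ⟨hmaps, hinj, Eq.superset ?_⟩
  exact Set.eq_of_subset_of_ncard_le hmaps.image_subset hinj.ncard_image.ge (Set.finite_Icc _ _)

theorem stdRestrict_comp {S U : Set ℕ} (hU : U.Finite) (hS : S ⊆ U) (lam : ℕ → ℕ) :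
    stdRestrict (stdRestrict lam U) (stdMap U '' S) = stdRestrict lam S := by
  have hSf := hU.subset hS
  have hinj := (stdMap_injOn hU).mono hS
  have hcard : (stdMap U '' S).ncard = S.ncard := hinj.ncard_image
  funext i
  by_cases hi : i ∈ Set.Icc 1 S.ncard
  · rw [← stdMap_image hSf] at hi
    obtain ⟨x, hx, rfl⟩ := hi
    rw [stdRestrict_stdMap hSf lam hx, ← stdMap_comp hU hS x,
      stdRestrict_stdMap (hSf.image _) _ ⟨x, hx, rfl⟩]
    have : {b ∈ stdMap U '' S | stdRestrict lam U b ≤ stdRestrict lam U (stdMap U x)}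
        = stdMap U '' {b ∈ S | lam b ≤ lam x} := by
      ext z
      constructor
      · rintro ⟨⟨y, hy, rfl⟩, h⟩
        rw [stdRestrict_stdMap hU lam (hS hx), stdRestrict_stdMap hU lam (hS hy),
          rank_le_iff hU lam (hS hy)] at h
        exact ⟨y, ⟨hy, h⟩, rfl⟩
      · rintro ⟨y, ⟨hy, h⟩, rfl⟩
        refine ⟨⟨y, hy, rfl⟩, ?_⟩
        rwa [stdRestrict_stdMap hU lam (hS hx), stdRestrict_stdMap hU lam (hS hy),
          rank_le_iff hU lam (hS hy)]
    rw [this]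
    exact (hinj.mono fun y hy => hy.1).ncard_image
  · have hi' : i ∉ Set.Icc 1 (stdMap U '' S).ncard := by rwa [hcard]
    exact (if_neg hi').trans (if_neg hi).symm

/-! ### Cliques and restrictions of interval partitions -/

theorem cliqueRel_uIcc {A : Set ℕ} {x y : ℕ} (h : cliqueRel A x y) (hx : x ∈ A) :
    Set.uIcc x y ⊆ A := by
  have key : x = y ∨ Set.uIcc x y ⊆ A := by
    clear hx
    induction h with
    | rel x y h =>
      obtain ⟨hx, hy, rfl⟩ := h
      refine Or.inr fun z hz => ?_
      rw [Set.uIcc_of_le (by omega)] at hz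
      obtain rfl | rfl : z = x ∨ z = x + 1 := by
        have := hz.1
        have := hz.2
        omega
      exacts [hx, hy]
    | refl => exact Or.inl rfl
    | symm x y _ ih => rwa [Set.uIcc_comm, eq_comm]
    | trans x y z _ _ ih₁ ih₂ =>
      rcases ih₁ with rfl | ih₁
      · exact ih₂
      rcases ih₂ with rfl | ih₂
      · exact Or.inr ih₁
      exact Or.inr (Set.uIcc_subset_uIcc_union_uIcc.trans (Set.union_subset ih₁ ih₂))
  rcases key with rfl | h
  · simpa using hx
  · exact h

theorem cliqueRel_of_uIcc {A : Set ℕ} {x y : ℕ} (h : Set.uIcc x y ⊆ A) : cliqueRel A x y := by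
  wlog hxy : x ≤ y generalizing x y
  · exact (this (by rwa [Set.uIcc_comm]) (by omega)).symm
  rw [Set.uIcc_of_le hxy] at h
  induction y, hxy using Nat.le_induction with
  | base => exact Relation.EqvGen.refl _
  | succ y hxy ih =>
    exact (ih ((Set.Icc_subset_Icc_right (by omega)).trans h)).trans _ _ _
      (.rel _ _ ⟨h ⟨hxy, by omega⟩, h ⟨by omega, le_rfl⟩, rfl⟩)

theorem ordConnected_of_mem_cliques {A c : Set ℕ} (hc : c ∈ cliques A) : c.OrdConnected := by
  obtain ⟨x, hx, rfl⟩ := hc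
  refine ⟨fun a ha b hb y hy => ?_⟩
  have hab : cliqueRel A a b := (ha.2.symm).trans _ _ _ hb.2
  have hI := cliqueRel_uIcc hab ha.1
  rw [Set.uIcc_of_le (hy.1.trans hy.2)] at hI
  refine ⟨hI hy, ha.2.trans _ _ _ (cliqueRel_of_uIcc ?_)⟩
  rw [Set.uIcc_of_le hy.1]
  exact (Set.Icc_subset_Icc_right hy.2).trans hI

theorem sUnion_restrictIP {L : Set (Set ℕ)} {A : Set ℕ} (hA : A ⊆ ⋃₀ L) :
    ⋃₀ restrictIP L A = A := by
  ext x
  constructor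
  · rintro ⟨_, ⟨-, B, -, c, ⟨y, -, rfl⟩, rfl⟩, hx⟩
    exact hx.2.1
  · intro hx
    obtain ⟨B, hB, hxB⟩ := hA hx
    have hxc : x ∈ B ∩ {y ∈ A | cliqueRel A x y} := ⟨hxB, hx, .refl _⟩
    exact ⟨_, ⟨Set.Nonempty.ne_empty ⟨x, hxc⟩, B, hB, _, ⟨x, hx, rfl⟩, rfl⟩, hxc⟩

theorem IsIntervalBlock.ordConnected {B : Set ℕ} (h : IsIntervalBlock B) : B.OrdConnected :=
  ⟨fun x hx z hz y hy => h.2.2 x hx z hz y hy.1 hy.2⟩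

/-- The refinement condition `s ≤ std(L(A))`, read in `A` instead of in `[|A|]`: the blocks of `s`
lift to intervals of consecutive integers, each inside a block of `L`. -/
theorem IPle_stdIP_restrictIP_iff {L s : Set (Set ℕ)} {A : Set ℕ} (hL : IsIntervalPartition L)
    (hs : IsIntervalPartition s) (hA : A.Finite) (hAL : A ⊆ ⋃₀ L) :
    IPle s (stdIP (restrictIP L A)) ↔
      ⋃₀ s = stdMap A '' A ∧
        ∀ B ∈ s, (liftSet A B).OrdConnected ∧ ∃ C ∈ L, liftSet A B ⊆ C := by
  have hU : ⋃₀ stdIP (restrictIP L A) = stdMap A '' A := by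
    unfold stdIP
    rw [sUnion_restrictIP hAL, Set.sUnion_image]
    conv_rhs => rw [← sUnion_restrictIP hAL, Set.image_sUnion, Set.sUnion_image]
    rw [sUnion_restrictIP hAL]
  unfold IPle
  rw [hU]
  refine and_congr_right fun hg => forall₂_congr fun B hB => ?_
  unfold stdIP
  rw [sUnion_restrictIP hAL]
  constructor
  · rintro ⟨_, ⟨_, ⟨-, C, hC, c, hc, rfl⟩, rfl⟩, hBC⟩
    have hcA : c ⊆ A := by
      obtain ⟨x, -, rfl⟩ := hc
      exact Set.sep_subset _ _
    have hZA : C ∩ c ⊆ A := Set.inter_subset_right.trans hcA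
    have hsub : liftSet A B ⊆ C ∩ c := by
      have := liftSet_mono A hBC
      rwa [liftSet_image hA hZA] at this
    exact ⟨ordConnected_liftSet hA (hs.2.1 B hB).ordConnected
      ((hL.2.1 C hC).ordConnected.inter (ordConnected_of_mem_cliques hc)) hZA hsub,
      C, hC, hsub.trans Set.inter_subset_left⟩
  · rintro ⟨hconn, C, hC, hBC⟩
    have hBA : B ⊆ stdMap A '' A := hg ▸ Set.subset_sUnion_of_mem hB
    obtain ⟨b, hb⟩ := (hs.2.1 B hB).1
    obtain ⟨x, hx, rfl⟩ := hBA hb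
    have hxB : x ∈ liftSet A B := ⟨hx, hb⟩
    have hsub : liftSet A B ⊆ C ∩ {y ∈ A | cliqueRel A x y} := fun y hy =>
      ⟨hBC hy, hy.1, cliqueRel_of_uIcc ((hconn.uIcc_subset hxB hy).trans (Set.sep_subset _ _))⟩
    refine ⟨_, ⟨_, ⟨Set.Nonempty.ne_empty ⟨x, hsub hxB⟩, C, hC, _, ⟨x, hx, rfl⟩, rfl⟩, rfl⟩, ?_⟩
    rw [← stdMap_image_liftSet hBA]
    exact Set.image_mono hsub

/-- The only candidate for an interval partition of `A` with standardization `s` is the family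
of the lifted blocks; it is one exactly when `A` has the size of `s` and all lifted blocks are
intervals. -/
theorem isIntervalPartitionOf_and_stdIP_eq_iff {I s : Set (Set ℕ)} {A : Set ℕ}
    (hs : IsIntervalPartition s) (hA : A.Finite) (hA1 : ∀ x ∈ A, 1 ≤ x) :
    (IsIntervalPartitionOf I A ∧ stdIP I = s) ↔
      I = liftSet A '' s ∧ ⋃₀ s = stdMap A '' A ∧ ∀ B ∈ s, (liftSet A B).OrdConnected := by
  constructor
  · rintro ⟨⟨hI, hIA⟩, rfl⟩
    unfold stdIP
    rw [hIA]
    have hX : ∀ X ∈ I, liftSet A (stdMap A '' X) = X := fun X hX =>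
      liftSet_image hA (hIA ▸ Set.subset_sUnion_of_mem hX)
    refine ⟨?_, ?_, ?_⟩
    · rw [Set.image_image, Set.image_congr hX, Set.image_id']
    · rw [Set.sUnion_image]
      conv_rhs => rw [← hIA, Set.image_sUnion, Set.sUnion_image, hIA]
    · rintro _ ⟨X, hXI, rfl⟩
      simp only [hX X hXI]
      exact (hI.2.1 X hXI).ordConnected
  · rintro ⟨rfl, hg, hconn⟩
    have hBA : ∀ B ∈ s, B ⊆ stdMap A '' A := fun B hB => hg ▸ Set.subset_sUnion_of_mem hB
    have hun : ⋃₀ (liftSet A '' s) = A := by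
      ext x
      constructor
      · rintro ⟨_, ⟨B, hB, rfl⟩, hx⟩
        exact hx.1
      · intro hx
        obtain ⟨B, hB, hxB⟩ : stdMap A x ∈ ⋃₀ s := hg ▸ ⟨x, hx, rfl⟩
        exact ⟨_, ⟨B, hB, rfl⟩, hx, hxB⟩
    refine ⟨⟨⟨by rwa [hun], ?_, ?_⟩, hun⟩, ?_⟩
    · rintro _ ⟨B, hB, rfl⟩
      refine ⟨?_, fun x hx => hA1 x hx.1, fun x hx z hz y hxy hyz =>
        (hconn B hB).out hx hz ⟨hxy, hyz⟩⟩
      have := (hs.2.1 B hB).1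
      rw [← stdMap_image_liftSet (hBA B hB)] at this
      exact this.of_image
    · rintro _ ⟨B, hB, rfl⟩ _ ⟨C, hC, rfl⟩ hne
      have hBC := hs.2.2 B hB C hC fun h => hne (by rw [h])
      rw [Set.eq_empty_iff_forall_notMem] at hBC ⊢
      exact fun x hx => hBC _ ⟨hx.1.2, hx.2.2⟩
    · unfold stdIP
      rw [hun, Set.image_image]
      have : ∀ B ∈ s, stdMap A '' liftSet A B = B := fun B hB => stdMap_image_liftSet (hBA B hB)
      rw [Set.image_congr this, Set.image_id']

/-! ### Gluing -/

theorem glueRel_mem {S : Set (Set ℕ)} {X Y : Set ℕ} (h : glueRel S X Y) : X ∈ S ↔ Y ∈ S := by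
  induction h with
  | rel X Y h => exact iff_of_true h.1 h.2.1
  | refl => exact Iff.rfl
  | symm X Y _ ih => exact ih.symm
  | trans X Y Z _ _ ih₁ ih₂ => exact ih₁.trans ih₂

/-- Overlapping intervals chain up to an interval. The sets `φ X` are the intervals in question;
`φ` is either the identity or a lift along a standardization map. -/
theorem glueRel_uIcc {S : Set (Set ℕ)} {φ : Set ℕ → Set ℕ}
    (hconn : ∀ X ∈ S, (φ X).OrdConnected) (hne : ∀ X ∈ S, (φ X).Nonempty)
    (hmeet : ∀ X ∈ S, ∀ Y ∈ S, (X ∩ Y).Nonempty → (φ X ∩ φ Y).Nonempty)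
    {X Y : Set ℕ} (h : glueRel S X Y) (hX : X ∈ S) {x y : ℕ} (hx : x ∈ φ X) (hy : y ∈ φ Y) :
    Set.uIcc x y ⊆ ⋃ W ∈ {W ∈ S | glueRel S X W}, φ W := by
  induction h generalizing x y with
  | rel X Y h =>
    obtain ⟨w, hwX, hwY⟩ := hmeet X h.1 Y h.2.1 h.2.2
    refine Set.uIcc_subset_uIcc_union_uIcc.trans (Set.union_subset
      (((hconn X h.1).uIcc_subset hx hwX).trans ?_) (((hconn Y h.2.1).uIcc_subset hwY hy).trans ?_))
    · exact Set.subset_biUnion_of_mem (u := φ) (⟨h.1, .refl _⟩ : X ∈ {W ∈ S | glueRel S X W})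
    · exact Set.subset_biUnion_of_mem (u := φ) (⟨h.2.1, .rel _ _ h⟩ : Y ∈ {W ∈ S | glueRel S X W})
  | refl X =>
    exact ((hconn X hX).uIcc_subset hx hy).trans
      (Set.subset_biUnion_of_mem (u := φ) (⟨hX, .refl _⟩ : X ∈ {W ∈ S | glueRel S X W}))
  | symm X Y h ih =>
    have hXS := (glueRel_mem h).2 hX
    rw [Set.uIcc_comm]
    refine (ih hXS hy hx).trans (Set.biUnion_subset_biUnion_left ?_)
    exact fun W hW => ⟨hW.1, h.symm.trans _ _ _ hW.2⟩
  | trans X Y Z h₁ h₂ ih₁ ih₂ =>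
    have hYS := (glueRel_mem h₁).1 hX
    obtain ⟨w, hw⟩ := hne Y hYS
    refine Set.uIcc_subset_uIcc_union_uIcc.trans (Set.union_subset (ih₁ hX hx hw)
      ((ih₂ hYS hw hy).trans (Set.biUnion_subset_biUnion_left ?_)))
    exact fun W hW => ⟨hW.1, h₁.trans _ _ _ hW.2⟩

theorem ordConnected_glueClass {S : Set (Set ℕ)} {φ : Set ℕ → Set ℕ}
    (hconn : ∀ X ∈ S, (φ X).OrdConnected) (hne : ∀ X ∈ S, (φ X).Nonempty)
    (hmeet : ∀ X ∈ S, ∀ Y ∈ S, (X ∩ Y).Nonempty → (φ X ∩ φ Y).Nonempty) (T : Set ℕ) :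
    (⋃ W ∈ {W ∈ S | glueRel S T W}, φ W).OrdConnected := by
  refine ⟨fun x hx z hz => ?_⟩
  simp only [Set.mem_iUnion] at hx hz
  obtain ⟨X, hX, hx⟩ := hx
  obtain ⟨Z, hZ, hz⟩ := hz
  refine Set.Icc_subset_uIcc.trans ((glueRel_uIcc hconn hne hmeet
    (hX.2.symm.trans _ _ _ hZ.2) hX.1 hx hz).trans (Set.biUnion_subset_biUnion_left ?_))
  exact fun W hW => ⟨hW.1, hX.2.trans _ _ _ hW.2⟩

theorem subset_glue_block {P Q : Set (Set ℕ)} {T : Set ℕ} (hT : T ∈ P ∪ Q) :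
    ∃ G ∈ glue P Q, T ⊆ G :=
  ⟨_, ⟨T, hT, rfl⟩, Set.subset_sUnion_of_mem ⟨hT, .refl _⟩⟩

theorem sUnion_glue (P Q : Set (Set ℕ)) : ⋃₀ glue P Q = ⋃₀ P ∪ ⋃₀ Q := by
  rw [← Set.sUnion_union]
  apply Set.Subset.antisymm
  · rintro x ⟨_, ⟨T, hT, rfl⟩, X, hX, hx⟩
    exact ⟨X, hX.1, hx⟩
  · rintro x ⟨T, hT, hx⟩
    obtain ⟨G, hG, hTG⟩ := subset_glue_block hT
    exact ⟨G, hG, hTG hx⟩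

theorem isIntervalPartition_glue {P Q : Set (Set ℕ)} (hP : IsIntervalPartition P)
    (hQ : IsIntervalPartition Q) : IsIntervalPartition (glue P Q) := by
  have hblock : ∀ X ∈ P ∪ Q, IsIntervalBlock X := fun X hX => hX.elim (hP.2.1 X) (hQ.2.1 X)
  refine ⟨?_, ?_, ?_⟩
  · rw [sUnion_glue]
    exact hP.1.union hQ.1
  · rintro _ ⟨T, hT, rfl⟩
    refine ⟨?_, ?_, ?_⟩
    · exact (hblock T hT).1.mono (Set.subset_sUnion_of_mem ⟨hT, .refl _⟩)
    · rintro x ⟨X, hX, hx⟩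
      exact (hblock X hX.1).2.1 x hx
    · have := ordConnected_glueClass (S := P ∪ Q) (φ := id) (fun X hX => (hblock X hX).ordConnected)
        (fun X hX => (hblock X hX).1) (fun _ _ _ _ h => h) T
      simp only [id, ← Set.sUnion_eq_biUnion] at this
      exact fun x hx z hz y hxy hyz => this.out hx hz ⟨hxy, hyz⟩
  · rintro _ ⟨T, hT, rfl⟩ _ ⟨T', hT', rfl⟩ hne
    rw [Set.eq_empty_iff_forall_notMem]
    rintro x ⟨⟨X, hX, hx⟩, X', hX', hx'⟩
    have hTT' : glueRel (P ∪ Q) T T' :=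
      (hX.2.trans _ _ _ (.rel _ _ ⟨hX.1, hX'.1, x, hx, hx'⟩)).trans _ _ _ hX'.2.symm
    refine hne ?_
    have : {X ∈ P ∪ Q | glueRel (P ∪ Q) T X} = {X ∈ P ∪ Q | glueRel (P ∪ Q) T' X} := by
      ext W
      exact ⟨fun h => ⟨h.1, hTT'.symm.trans _ _ _ h.2⟩, fun h => ⟨h.1, hTT'.trans _ _ _ h.2⟩⟩
    simp only [this]

/-- If the lifts to `U` of the blocks of `P` and `Q` are intervals contained in blocks of `L`, so
are the lifts of the glued blocks: members of a gluing class overlap, hence share their block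
of `L`. -/
theorem liftSet_glue {L P Q : Set (Set ℕ)} {U : Set ℕ} (hL : IsIntervalPartition L)
    (hPQ : ∀ X ∈ P ∪ Q, X.Nonempty ∧ X ⊆ stdMap U '' U ∧ (liftSet U X).OrdConnected ∧
      ∃ C ∈ L, liftSet U X ⊆ C) :
    ∀ G ∈ glue P Q, (liftSet U G).OrdConnected ∧ ∃ C ∈ L, liftSet U G ⊆ C := by
  have hmeet : ∀ X ∈ P ∪ Q, ∀ Y, (X ∩ Y).Nonempty →
      (liftSet U X ∩ liftSet U Y).Nonempty := by
    rintro X hX Y ⟨w, hwX, hwY⟩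
    obtain ⟨x, hx, rfl⟩ := (hPQ X hX).2.1 hwX
    exact ⟨x, ⟨hx, hwX⟩, hx, hwY⟩
  rintro _ ⟨T, hT, rfl⟩
  have hun : liftSet U (⋃₀ {X ∈ P ∪ Q | glueRel (P ∪ Q) T X})
      = ⋃ W ∈ {X ∈ P ∪ Q | glueRel (P ∪ Q) T X}, liftSet U W := by
    ext x
    simp only [liftSet, Set.mem_ofPred_eq, Set.mem_sUnion, Set.mem_iUnion, exists_prop]
    exact ⟨fun ⟨hx, W, hW, h⟩ => ⟨W, hW, hx, h⟩, fun ⟨W, hW, hx, h⟩ => ⟨hx, W, hW, h⟩⟩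
  simp only [hun]
  refine ⟨ordConnected_glueClass (fun X hX => (hPQ X hX).2.2.1) (fun X hX => ?_)
    (fun X hX Y _ => hmeet X hX Y) T, ?_⟩
  · have := hmeet X hX X (by simpa using (hPQ X hX).1)
    simpa using this
  · have step : ∀ X Y C, X ∈ P ∪ Q → Y ∈ P ∪ Q → (X ∩ Y).Nonempty → C ∈ L → liftSet U X ⊆ C →
        liftSet U Y ⊆ C := by
      intro X Y C hX hY hXY hC hXC
      obtain ⟨C', hC', hYC'⟩ := (hPQ Y hY).2.2.2
      obtain ⟨w, hwX, hwY⟩ := hmeet X hX Y hXY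
      have : C = C' := by
        by_contra hne
        have := hL.2.2 C hC C' hC' hne
        rw [Set.eq_empty_iff_forall_notMem] at this
        exact this w ⟨hXC hwX, hYC' hwY⟩
      rwa [this]
    have inv : ∀ X Y, glueRel (P ∪ Q) X Y → ∀ C ∈ L, (liftSet U X ⊆ C ↔ liftSet U Y ⊆ C) := by
      intro X Y h C hC
      induction h with
      | rel X Y h =>
        exact ⟨step X Y C h.1 h.2.1 h.2.2 hC,
          step Y X C h.2.1 h.1 (by rw [Set.inter_comm]; exact h.2.2) hC⟩
      | refl => exact Iff.rfl
      | symm X Y _ ih => exact ih.symm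
      | trans X Y Z _ _ ih₁ ih₂ => exact ih₁.trans ih₂
    obtain ⟨C, hC, hTC⟩ := (hPQ T hT).2.2.2
    exact ⟨C, hC, Set.iUnion₂_subset fun W hW => (inv T W hW.2 C hC).1 hTC⟩

/-! ### Relabelling a pair of occurrences by ranks in its union -/

/-- `A` is an occurrence of the partition `s` in `L`: it has the size of `s`, and the blocks of `s`
occupy consecutive positions inside blocks of `L`. -/
def Fits (L s : Set (Set ℕ)) (A : Set ℕ) : Prop :=
  A ⊆ ⋃₀ L ∧ ⋃₀ s = stdMap A '' A ∧
    ∀ B ∈ s, (liftSet A B).OrdConnected ∧ ∃ C ∈ L, liftSet A B ⊆ C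

theorem fits_iff {L s : Set (Set ℕ)} (hL : IsIntervalPartition L) (hs : IsIntervalPartition s)
    (A : Set ℕ) : (A ⊆ ⋃₀ L ∧ IPle s (stdIP (restrictIP L A))) ↔ Fits L s A :=
  and_congr_right fun h => IPle_stdIP_restrictIP_iff hL hs (hL.1.subset h) h

/-- `A` carries a (unique) interval partition with standardization `s`, namely the family of the
lifted blocks. -/
def Carries (s : Set (Set ℕ)) (A : Set ℕ) : Prop :=
  ⋃₀ s = stdMap A '' A ∧ ∀ B ∈ s, (liftSet A B).OrdConnected

theorem Carries.isIntervalPartitionOf {s : Set (Set ℕ)} {A : Set ℕ} (h : Carries s A)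
    (hs : IsIntervalPartition s) (hA : A.Finite) (hA1 : ∀ x ∈ A, 1 ≤ x) :
    IsIntervalPartitionOf (liftSet A '' s) A :=
  ((isIntervalPartitionOf_and_stdIP_eq_iff hs hA hA1).2 ⟨rfl, h⟩).1

/-- In the definition of the section coefficient, the two interval partitions are determined by
their ground sets. -/
theorem exists_partitions_iff {s t g : Set (Set ℕ)} {A A' : Set ℕ} (hs : IsIntervalPartition s)
    (ht : IsIntervalPartition t) (hA : A.Finite) (hA1 : ∀ x ∈ A, 1 ≤ x) (hA' : A'.Finite)
    (hA1' : ∀ x ∈ A', 1 ≤ x) :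
    (∃ I I' : Set (Set ℕ), IsIntervalPartitionOf I A ∧ IsIntervalPartitionOf I' A' ∧
        stdIP I = s ∧ stdIP I' = t ∧ glue I I' = g) ↔
      Carries s A ∧ Carries t A' ∧ glue (liftSet A '' s) (liftSet A' '' t) = g := by
  constructor
  · rintro ⟨I, I', hI, hI', hs', ht', rfl⟩
    obtain ⟨rfl, h⟩ := (isIntervalPartitionOf_and_stdIP_eq_iff hs hA hA1).1 ⟨hI, hs'⟩
    obtain ⟨rfl, h'⟩ := (isIntervalPartitionOf_and_stdIP_eq_iff ht hA' hA1').1 ⟨hI', ht'⟩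
    exact ⟨h, h', rfl⟩
  · rintro ⟨h, h', hg⟩
    obtain ⟨hI, hIs⟩ := (isIntervalPartitionOf_and_stdIP_eq_iff hs hA hA1).2 ⟨rfl, h⟩
    obtain ⟨hI', hIt⟩ := (isIntervalPartitionOf_and_stdIP_eq_iff ht hA' hA1').2 ⟨rfl, h'⟩
    exact ⟨_, _, hI, hI', hIs, hIt, hg⟩

theorem stdMap_image_image {S U : Set ℕ} (hU : U.Finite) (hS : S ⊆ U) :
    stdMap (stdMap U '' S) '' (stdMap U '' S) = stdMap S '' S := by
  rw [Set.image_image]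
  exact Set.image_congr fun x _ => stdMap_comp hU hS x

theorem Fits.carries {L s : Set (Set ℕ)} {S U : Set ℕ} (h : Fits L s S) (hU : U.Finite)
    (hS : S ⊆ U) : Carries s (stdMap U '' S) := by
  refine ⟨by rw [stdMap_image_image hU hS]; exact h.2.1, fun B hB => ?_⟩
  rw [liftSet_stdMap_image hU hS]
  exact ordConnected_stdMap_image hU (h.2.2 B hB).1 fun x hx => hS hx.1

theorem Fits.blocks {L s : Set (Set ℕ)} {S U : Set ℕ} (hs : IsIntervalPartition s)
    (h : Fits L s S) (hU : U.Finite) (hS : S ⊆ U) :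
    ∀ X ∈ liftSet (stdMap U '' S) '' s, X.Nonempty ∧ X ⊆ stdMap U '' U ∧
      (liftSet U X).OrdConnected ∧ ∃ C ∈ L, liftSet U X ⊆ C := by
  rintro _ ⟨B, hB, rfl⟩
  have hBS : liftSet S B ⊆ U := fun x hx => hS hx.1
  rw [liftSet_stdMap_image hU hS, liftSet_image hU hBS]
  refine ⟨?_, Set.image_mono hBS, h.2.2 B hB⟩
  have hne := (hs.2.1 B hB).1
  rw [← stdMap_image_liftSet (A := S) (B := B) (h.2.1 ▸ Set.subset_sUnion_of_mem hB)] at hne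
  exact hne.of_image.image _

/-- A set of ranks carrying `s` whose blocks refine those of `g` turns an occurrence of `g`
into an occurrence of `s`. -/
theorem fits_liftSet {L s g : Set (Set ℕ)} {A U : Set ℕ} (hU : U.Finite) (h : Fits L g U)
    (hA : A ⊆ stdMap U '' U) (hs : Carries s A)
    (hsg : ∀ B ∈ s, ∃ G ∈ g, liftSet A B ⊆ G) : Fits L s (liftSet U A) := by
  have hSU : liftSet U A ⊆ U := Set.sep_subset _ _
  have hSA : stdMap U '' liftSet U A = A := stdMap_image_liftSet hA
  refine ⟨hSU.trans h.1, ?_, fun B hB => ?_⟩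
  · rw [← stdMap_image_image hU hSU, hSA]
    exact hs.1
  · obtain ⟨G, hG, hBG⟩ := hsg B hB
    obtain ⟨hconn, C, hC, hGC⟩ := h.2.2 G hG
    have heq : liftSet (liftSet U A) B = liftSet U (liftSet A B) := by
      rw [← liftSet_image hU (fun x hx => hSU hx.1 : liftSet (liftSet U A) B ⊆ U),
        ← liftSet_stdMap_image hU hSU, hSA]
    rw [heq]
    have hsub := liftSet_mono U hBG
    exact ⟨ordConnected_liftSet hU (hs.2 B hB) hconn (Set.sep_subset _ _) hsub,
      C, hC, hsub.trans hGC⟩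

/-- The vincular pattern spanned by a pair of occurrences `(S, T)` of `p` and `q`: the partitions
of the rank sets of `S` and `T` in `S ∪ T` are glued, and `lam` is standardized on `S ∪ T`. -/
noncomputable def pairType (lam : ℕ → ℕ) (p q : Set (Set ℕ) × (ℕ → ℕ)) (ST : Set ℕ × Set ℕ) :
    Set (Set ℕ) × (ℕ → ℕ) :=
  (glue (liftSet (stdMap (ST.1 ∪ ST.2) '' ST.1) '' p.1)
      (liftSet (stdMap (ST.1 ∪ ST.2) '' ST.2) '' q.1),
    stdRestrict lam (ST.1 ∪ ST.2))

theorem one_le_of_mem_stdMap_image {S U : Set ℕ} (hU : U.Finite) (hS : S ⊆ U) :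
    ∀ x ∈ stdMap U '' S, 1 ≤ x := fun x hx => by
  have : x ∈ Set.Icc 1 U.ncard := stdMap_image hU ▸ Set.image_mono hS hx
  exact this.1

section Pairs

variable {L : Set (Set ℕ)} {lam : ℕ → ℕ} {p q : Set (Set ℕ) × (ℕ → ℕ)} {S T : Set ℕ}

theorem isIntervalPartitionOf_pairType (hL : IsIntervalPartition L) (hp : IsIntervalPartition p.1)
    (hq : IsIntervalPartition q.1) (hS : Fits L p.1 S) (hT : Fits L q.1 T) :
    IsIntervalPartitionOf (pairType lam p q (S, T)).1 (stdMap (S ∪ T) '' (S ∪ T)) := by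
  have hU : (S ∪ T).Finite := (hL.1.subset hS.1).union (hL.1.subset hT.1)
  have hSU : S ⊆ S ∪ T := Set.subset_union_left
  have hTU : T ⊆ S ∪ T := Set.subset_union_right
  have hP := (hS.carries hU hSU).isIntervalPartitionOf hp ((hU.subset hSU).image _)
    (one_le_of_mem_stdMap_image hU hSU)
  have hQ := (hT.carries hU hTU).isIntervalPartitionOf hq ((hU.subset hTU).image _)
    (one_le_of_mem_stdMap_image hU hTU)
  refine ⟨isIntervalPartition_glue hP.1 hQ.1, ?_⟩
  unfold pairType
  simp only
  rw [sUnion_glue, hP.2, hQ.2, Set.image_union]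

theorem fits_pairType (hL : IsIntervalPartition L) (hp : IsIntervalPartition p.1)
    (hq : IsIntervalPartition q.1) (hS : Fits L p.1 S) (hT : Fits L q.1 T) :
    Fits L (pairType lam p q (S, T)).1 (S ∪ T) := by
  have hU : (S ∪ T).Finite := (hL.1.subset hS.1).union (hL.1.subset hT.1)
  refine ⟨Set.union_subset hS.1 hT.1, (isIntervalPartitionOf_pairType hL hp hq hS hT).2, ?_⟩
  refine liftSet_glue hL ?_
  rintro X (hX | hX)
  · exact hS.blocks hp hU Set.subset_union_left X hX
  · exact hT.blocks hq hU Set.subset_union_right X hX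

theorem isVincular_pairType (hL : IsIntervalPartition L) (hp : IsIntervalPartition p.1)
    (hq : IsIntervalPartition q.1) (hS : Fits L p.1 S) (hT : Fits L q.1 T)
    (hlam : Set.InjOn lam (⋃₀ L)) : IsVincular (pairType lam p q (S, T)) := by
  have hU : (S ∪ T).Finite := (hL.1.subset hS.1).union (hL.1.subset hT.1)
  refine ⟨(S ∪ T).ncard, ?_, ?_⟩
  · rw [← stdMap_image hU]
    exact isIntervalPartitionOf_pairType hL hp hq hS hT
  · exact isPermOf_stdRestrict hU (hlam.mono (Set.union_subset hS.1 hT.1))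

end Pairs

/-- The pairs of occurrences of `p` and `q` spanning the pattern `r` are in bijection with the
occurrences of `r` decorated with a way of covering `r` by `p` and `q`. -/
theorem vincCoeff_mul_GPC {L : Set (Set ℕ)} {lam : ℕ → ℕ} {p q r : Set (Set ℕ) × (ℕ → ℕ)}
    (hL : IsIntervalPartition L) (hp : IsIntervalPartition p.1) (hq : IsIntervalPartition q.1)
    (hr : IsVincular r) :
    vincCoeff p q r * GPC L lam r =
      {ST : Set ℕ × Set ℕ | ((Fits L p.1 ST.1 ∧ stdRestrict lam ST.1 = p.2) ∧
        (Fits L q.1 ST.2 ∧ stdRestrict lam ST.2 = q.2)) ∧ pairType lam p q ST = r}.ncard := by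
  obtain ⟨n, ⟨hrI, hrn⟩, -⟩ := hr
  have hr1 : ∀ x ∈ ⋃₀ r.1, 1 ≤ x := fun x hx => by
    rw [hrn] at hx
    exact hx.1
  unfold vincCoeff GPC
  rw [← Set.ncard_prod]
  symm
  refine Set.ncard_congr (fun ST _ => ((stdMap (ST.1 ∪ ST.2) '' ST.1,
    stdMap (ST.1 ∪ ST.2) '' ST.2), ST.1 ∪ ST.2)) ?_ ?_ ?_
  · rintro ⟨S, T⟩ ⟨⟨⟨hS, hSp⟩, hT, hTq⟩, rfl⟩
    dsimp only at hS hSp hT hTq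
    have hU : (S ∪ T).Finite := (hL.1.subset hS.1).union (hL.1.subset hT.1)
    have hSU : S ⊆ S ∪ T := Set.subset_union_left
    have hTU : T ⊆ S ∪ T := Set.subset_union_right
    have hfit := fits_pairType (lam := lam) hL hp hq hS hT
    refine ⟨⟨?_, ?_, ?_, ?_⟩, ?_⟩
    · rw [hfit.2.1, Set.image_union]
    · exact (exists_partitions_iff hp hq ((hU.subset hSU).image _)
        (one_le_of_mem_stdMap_image hU hSU) ((hU.subset hTU).image _)
        (one_le_of_mem_stdMap_image hU hTU)).2 ⟨hS.carries hU hSU, hT.carries hU hTU, rfl⟩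
    · exact (stdRestrict_comp hU hSU lam).trans hSp
    · exact (stdRestrict_comp hU hTU lam).trans hTq
    · have := (fits_iff hL hrI _).2 hfit
      exact ⟨this.1, this.2, rfl⟩
  · rintro ⟨S, T⟩ ⟨S', T'⟩ ⟨⟨⟨hS, -⟩, hT, -⟩, -⟩ - heq
    dsimp only at hS hT
    simp only [Prod.mk.injEq] at heq ⊢
    obtain ⟨⟨h₁, h₂⟩, h₃⟩ := heq
    rw [← h₃] at h₁ h₂
    have hU : (S ∪ T).Finite := (hL.1.subset hS.1).union (hL.1.subset hT.1)
    have hinj := stdMap_injOn hU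
    exact ⟨(hinj.image_eq_image_iff Set.subset_union_left
        (h₃ ▸ Set.subset_union_left)).1 h₁,
      (hinj.image_eq_image_iff Set.subset_union_right
        (h₃ ▸ Set.subset_union_right)).1 h₂⟩
  · rintro ⟨⟨A, A'⟩, U⟩ ⟨⟨hAA', hII', hAp, hAq⟩, hUL, hUr, hUlam⟩
    dsimp only at hAA' hII' hAp hAq hUL hUr hUlam
    have hfit := (fits_iff hL hrI U).1 ⟨hUL, hUr⟩
    have hU : U.Finite := hL.1.subset hUL
    have hAr : A ⊆ ⋃₀ r.1 := hAA' ▸ Set.subset_union_left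
    have hAr' : A' ⊆ ⋃₀ r.1 := hAA' ▸ Set.subset_union_right
    obtain ⟨hcA, hcA', hg⟩ := (exists_partitions_iff hp hq (hrI.1.subset hAr)
      (fun x hx => hr1 x (hAr hx)) (hrI.1.subset hAr') (fun x hx => hr1 x (hAr' hx))).1 hII'
    have hAU : A ⊆ stdMap U '' U := hfit.2.1 ▸ hAr
    have hAU' : A' ⊆ stdMap U '' U := hfit.2.1 ▸ hAr'
    have hun : liftSet U A ∪ liftSet U A' = U := by
      apply Set.Subset.antisymm (Set.union_subset (Set.sep_subset _ _) (Set.sep_subset _ _))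
      intro x hx
      have : stdMap U x ∈ A ∪ A' := by
        rw [hAA', hfit.2.1]
        exact ⟨x, hx, rfl⟩
      exact this.imp (fun h => ⟨hx, h⟩) (fun h => ⟨hx, h⟩)
    have hSA := stdMap_image_liftSet hAU
    have hSA' := stdMap_image_liftSet hAU'
    refine ⟨(liftSet U A, liftSet U A'), ⟨⟨⟨?_, ?_⟩, ?_, ?_⟩, ?_⟩, ?_⟩
    · exact fits_liftSet hU hfit hAU hcA fun B hB => hg ▸ subset_glue_block (Or.inl ⟨B, hB, rfl⟩)
    · have hcomp := stdRestrict_comp (S := liftSet U A) hU (Set.sep_subset _ _) lam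
      rw [hSA, hUlam] at hcomp
      exact hcomp.symm.trans hAp
    · exact fits_liftSet hU hfit hAU' hcA' fun B hB => hg ▸ subset_glue_block (Or.inr ⟨B, hB, rfl⟩)
    · have hcomp := stdRestrict_comp (S := liftSet U A') hU (Set.sep_subset _ _) lam
      rw [hSA', hUlam] at hcomp
      exact hcomp.symm.trans hAq
    · simp only [pairType, hun, hSA, hSA', hg, hUlam]
    · simp only [hun, hSA, hSA']

/-- character property of the vincular signature. -/
theorem GPC_characterProperty (N : ℕ) (L : Set (Set ℕ)) (lam : ℕ → ℕ)
    (hL : IsIntervalPartitionOf L (Set.Icc 1 N)) (hlam : IsPermOf N lam)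
    (p q : Set (Set ℕ) × (ℕ → ℕ)) (hp : IsVincular p) (hq : IsVincular q) :
    GPC L lam p * GPC L lam q
        = (∑ᶠ r ∈ {r : Set (Set ℕ) × (ℕ → ℕ) | IsVincular r},
            vincCoeff p q r * GPC L lam r) ∧
      {r : Set (Set ℕ) × (ℕ → ℕ) | IsVincular r ∧ vincCoeff p q r * GPC L lam r ≠ 0}.Finite := by
  obtain ⟨np, ⟨hpI, -⟩, -⟩ := hp
  obtain ⟨nq, ⟨hqI, -⟩, -⟩ := hq
  obtain ⟨hLI, hLN⟩ := hL
  have hinj : Set.InjOn lam (⋃₀ L) := hLN ▸ hlam.1.injOn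
  -- The pairs of occurrences counted by the left-hand side.
  set X : Set (Set ℕ × Set ℕ) := {ST | (Fits L p.1 ST.1 ∧ stdRestrict lam ST.1 = p.2) ∧
    (Fits L q.1 ST.2 ∧ stdRestrict lam ST.2 = q.2)} with hX
  have hXfin : X.Finite := by
    refine (hLI.1.finite_subsets.prod hLI.1.finite_subsets).subset ?_
    exact fun ST h => ⟨h.1.1.1, h.2.1.1⟩
  have hleft : GPC L lam p * GPC L lam q = X.ncard := by
    unfold GPC
    rw [← Set.ncard_prod]
    congr 1
    ext ST
    simp only [Set.mem_prod, Set.mem_ofPred_eq, ← and_assoc, fits_iff hLI hpI, fits_iff hLI hqI, hX]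
  have hterm : ∀ r, IsVincular r → vincCoeff p q r * GPC L lam r =
      {ST ∈ X | pairType lam p q ST = r}.ncard := fun r hr => vincCoeff_mul_GPC hLI hpI hqI hr
  have hsupp : ∀ r, IsVincular r → vincCoeff p q r * GPC L lam r ≠ 0 →
      r ∈ pairType lam p q '' X := by
    intro r hr h
    rw [hterm r hr] at h
    obtain ⟨ST, hST⟩ := Set.nonempty_of_ncard_ne_zero h
    exact ⟨ST, hST⟩
  have hvinc : ∀ r ∈ pairType lam p q '' X, IsVincular r := by
    rintro _ ⟨⟨S, T⟩, h, rfl⟩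
    exact isVincular_pairType hLI hpI hqI h.1.1 h.2.1 hinj
  refine ⟨?_, (hXfin.image (pairType lam p q)).subset fun r hr => hsupp r hr.1 hr.2⟩
  classical
  rw [hleft, finsum_mem_eq_sum_of_inter_support_eq (t := (hXfin.image (pairType lam p q)).toFinset)]
  · rw [Set.ncard_eq_toFinset_card X hXfin, Finset.card_eq_sum_card_fiberwise
      (f := pairType lam p q) (t := (hXfin.image (pairType lam p q)).toFinset)]
    · refine Finset.sum_congr rfl fun r hr => ?_
      rw [Set.Finite.mem_toFinset] at hr
      rw [hterm r (hvinc r hr), ← Set.ncard_coe_finset]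
      congr 1
      ext ST
      simp
    · intro ST hST
      simp only [Set.Finite.coe_toFinset] at hST ⊢
      exact ⟨ST, hST, rfl⟩
  · ext r
    simp only [Set.mem_inter_iff, Function.mem_support, Set.Finite.coe_toFinset]
    exact ⟨fun h => ⟨hsupp r h.1 h.2, h.2⟩, fun h => ⟨hvinc r h.1, h.2⟩⟩
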